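/- For every finite loopless directed graph G, the fractional directed local chromatic number ψ_d*(G) equals the infimum of the ratios h/r over all pairs of positive integers r ≤ h such that G admits an h-local r-multi-coloring (with some finite color set). -/

import Mathlib

open Classical

/-- The underlying undirected simple graph of a digraph given by an arc relation `D`. -/
def underlying {V : Type*} (D : V → V → Prop) : SimpleGraph V := SimpleGraph.fromRel D

/-- `A` is an independent set of the simple graph `G`. -/
def IsIndepF {V : Type*} (G : SimpleGraph V) (A : Finset V) : Prop :=
  ∀ u ∈ A, ∀ v ∈ A, ¬ G.Adj u v

/-- A fractional coloring of `G`: nonnegative weights on the independent sets of `G` such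
that the sets containing any fixed vertex have total weight at least `1`. -/
structure FracColoring {V : Type*} [Fintype V] (G : SimpleGraph V) where
  x : Finset V → ℝ
  nonneg : ∀ A, 0 ≤ x A
  supp : ∀ A, x A ≠ 0 → IsIndepF G A
  cover : ∀ v : V, 1 ≤ ∑ A : Finset V, if v ∈ A then x A else 0

/-- The total weight of a fractional coloring. -/
noncomputable def totalWeight {V : Type*} [Fintype V] {G : SimpleGraph V}
    (f : FracColoring G) : ℝ :=
  ∑ A : Finset V, f.x A

/-- The fractional chromatic number `χ*(G)`: the minimum total weight of a fractional
coloring of `G`. -/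
noncomputable def fracChrom {V : Type*} [Fintype V] (G : SimpleGraph V) : ℝ :=
  sInf {w : ℝ | ∃ f : FracColoring G, w = totalWeight f}

/-- The local weight of a fractional coloring of a digraph `D`:
`1` plus the maximum over vertices `v` of the total weight of the independent sets meeting
the out-neighborhood of `v`. -/
noncomputable def localWeight {V : Type*} [Fintype V] (D : V → V → Prop)
    (f : FracColoring (underlying D)) : ℝ :=
  1 + ⨆ v : V, ∑ A : Finset V, if ∃ u ∈ A, D v u then f.x A else 0

/-- The fractional directed local chromatic number `ψ_d*(D)`: the minimum local weight of a
fractional coloring of `D`. -/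
noncomputable def fracDirLocal {V : Type*} [Fintype V] (D : V → V → Prop) : ℝ :=
  sInf {w : ℝ | ∃ f : FracColoring (underlying D), w = localWeight D f}

/-- An `r`-multi-coloring of a digraph: every vertex gets `r` colors, and each color class
is an independent set of the underlying undirected graph. -/
def IsMultiColoring {V C : Type*} (D : V → V → Prop) (r : ℕ) (χ : V → Finset C) : Prop :=
  (∀ v, (χ v).card = r) ∧
  ∀ (c : C) (u v : V), c ∈ χ u → c ∈ χ v → ¬ (underlying D).Adj u v

/-- An `h`-local `r`-multi-coloring: an `r`-multi-coloring in which the colors appearing on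
any out-neighborhood number at most `h - r`. -/
def IsHLocalMulti {V C : Type*} [Fintype V] (D : V → V → Prop) (h r : ℕ)
    (χ : V → Finset C) : Prop :=
  IsMultiColoring D r χ ∧
  ∀ v, ((Finset.univ.filter (fun u => D v u)).biUnion χ).card ≤ h - r

/-!
An `h`-local `r`-multi-coloring is the same thing as a weighting of the independent sets by natural
numbers: the weight of `A` counts the colors whose color class is `A`, and conversely `m A` copies
of each `A` serve as colors, of which every vertex keeps `r`. Dividing such a weighting by `r`
gives a fractional coloring of local weight at most `h / r`. Conversely, scaling a fractional
coloring `x` by `N` and rounding up gives a weighting with `r = N`; the rounding error is at most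
the number of vertex sets, independently of `N`, so `h / N` comes arbitrarily close to the local
weight of `x`.
-/

open Finset

variable {V C : Type*} [Fintype V]

/-- The total weight, under a weighting `x` of vertex sets, of the sets meeting the
out-neighborhood of `v`. It is used with real weights for fractional colorings and with natural
number weights for multi-colorings. -/
noncomputable def outWeight {M : Type*} [AddCommMonoid M] (D : V → V → Prop) (x : Finset V → M)
    (v : V) : M :=
  ∑ A with ∃ u ∈ A, D v u, x A

section LocalWeight

variable {D : V → V → Prop}

theorem FracColoring.one_le_sum_mem {G : SimpleGraph V} (f : FracColoring G) (v : V) :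
    1 ≤ ∑ A with v ∈ A, f.x A := by
  simpa only [sum_filter] using f.cover v

instance (G : SimpleGraph V) : Nonempty (FracColoring G) := by
  refine ⟨⟨fun A => if IsIndepF G A then 1 else 0, fun A => by positivity,
    fun A hA => by simpa only [ne_eq, ite_eq_right_iff, one_ne_zero, imp_false, not_not] using hA,
    fun v => ?_⟩⟩
  have hv : IsIndepF G {v} := by simp [IsIndepF]
  rw [← sum_filter]
  refine le_trans ?_ (single_le_sum (a := {v}) (fun A _ => by positivity) (by simp))
  rw [if_pos hv]

theorem localWeight_eq (f : FracColoring (underlying D)) :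
    localWeight D f = 1 + ⨆ v, outWeight D f.x v := by
  simp only [localWeight, outWeight, sum_filter]

theorem outWeight_nonneg (f : FracColoring (underlying D)) (v : V) : 0 ≤ outWeight D f.x v :=
  sum_nonneg fun A _ => f.nonneg A

theorem one_le_localWeight (f : FracColoring (underlying D)) : 1 ≤ localWeight D f := by
  rw [localWeight_eq]
  exact le_add_of_nonneg_right (Real.iSup_nonneg (outWeight_nonneg f))

theorem one_add_outWeight_le_localWeight (f : FracColoring (underlying D)) (v : V) :
    1 + outWeight D f.x v ≤ localWeight D f := by
  rw [localWeight_eq]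
  gcongr
  exact le_ciSup (Set.finite_range (outWeight D f.x)).bddAbove v

-- For empty `V` the supremum in `localWeight` has the conventional value `0`.
theorem localWeight_le {f : FracColoring (underlying D)} {b : ℝ} (hb : 1 ≤ b)
    (h : ∀ v, 1 + outWeight D f.x v ≤ b) : localWeight D f ≤ b := by
  rw [localWeight_eq, ← le_sub_iff_add_le']
  exact Real.iSup_le (fun v => le_sub_iff_add_le'.mpr (h v)) (sub_nonneg.mpr hb)

theorem fracDirLocal_le_localWeight (f : FracColoring (underlying D)) :
    fracDirLocal D ≤ localWeight D f :=
  csInf_le ⟨1, by rintro _ ⟨g, rfl⟩; exact one_le_localWeight g⟩ ⟨f, rfl⟩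

theorem le_fracDirLocal {b : ℝ} (h : ∀ f : FracColoring (underlying D), b ≤ localWeight D f) :
    b ≤ fracDirLocal D :=
  le_csInf ⟨_, Classical.arbitrary (FracColoring (underlying D)), rfl⟩
    (by rintro _ ⟨f, rfl⟩; exact h f)

end LocalWeight

/-- The integral counterpart of a fractional coloring of local weight at most `h / r`: weights in
`ℕ` on the independent sets covering every vertex at least `r` times and every out-neighborhood at
most `h - r` times. It is a multi-coloring in which only the color classes are remembered. -/
structure IsLocalWeighting (D : V → V → Prop) (h r : ℕ) (m : Finset V → ℕ) : Prop where
  indep : ∀ A, m A ≠ 0 → IsIndepF (underlying D) A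
  cover : ∀ v, r ≤ ∑ A with v ∈ A, m A
  outWeight_le : ∀ v, outWeight D m v ≤ h - r

section ColorClass

variable {D : V → V → Prop} {h r : ℕ} {χ : V → Finset C}

/-- The set of vertices receiving the color `c`. -/
noncomputable def colorClass (χ : V → Finset C) (c : C) : Finset V := {v | c ∈ χ v}

theorem mem_colorClass {c : C} {v : V} : v ∈ colorClass χ c ↔ c ∈ χ v := by
  simp [colorClass]

/-- The number of colors with color class `A`. Only colors in use are counted, so that the empty
class of the unused colors, of which there may be infinitely many, plays no role. -/
noncomputable def classMultiplicity (χ : V → Finset C) (A : Finset V) : ℕ :=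
  #{c ∈ univ.biUnion χ | colorClass χ c = A}

theorem sum_classMultiplicity (χ : V → Finset C) (P : Finset V → Prop)
    [DecidablePred P] :
    ∑ A with P A, classMultiplicity χ A = #{c ∈ univ.biUnion χ | P (colorClass χ c)} := by
  simpa only [classMultiplicity, mem_filter_univ] using
    sum_card_fiberwise_eq_card_filter (univ.biUnion χ) {A | P A} (colorClass χ)

theorem sum_mem_classMultiplicity (χ : V → Finset C) (v : V) :
    ∑ A with v ∈ A, classMultiplicity χ A = #(χ v) := by
  rw [sum_classMultiplicity]
  congr 1
  ext c
  simp only [mem_colorClass, mem_filter, mem_biUnion, mem_univ, true_and, and_iff_right_iff_imp]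
  exact fun hc => ⟨v, hc⟩

theorem outWeight_classMultiplicity (D : V → V → Prop) (χ : V → Finset C) (v : V) :
    outWeight D (classMultiplicity χ) v = #((univ.filter (D v)).biUnion χ) := by
  rw [outWeight, sum_classMultiplicity]
  congr 1
  ext c
  simp only [mem_colorClass, mem_filter, mem_biUnion, mem_univ, true_and]
  constructor
  · rintro ⟨-, u, hcu, hvu⟩
    exact ⟨u, hvu, hcu⟩
  · rintro ⟨u, hvu, hcu⟩
    exact ⟨⟨u, hcu⟩, u, hcu, hvu⟩

theorem IsHLocalMulti.isLocalWeighting (H : IsHLocalMulti D h r χ) :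
    IsLocalWeighting D h r (classMultiplicity χ) where
  indep A hA u hu v hv := by
    obtain ⟨c, hc⟩ := card_ne_zero.mp hA
    obtain rfl := (mem_filter.mp hc).2
    exact H.1.2 c u v (mem_colorClass.mp hu) (mem_colorClass.mp hv)
  cover v := by rw [sum_mem_classMultiplicity, H.1.1]
  outWeight_le v := (outWeight_classMultiplicity D χ v).trans_le (H.2 v)

theorem IsHLocalMulti.map {C' : Type*} (e : C ↪ C') (H : IsHLocalMulti D h r χ) :
    IsHLocalMulti D h r fun v => (χ v).map e := by
  refine ⟨⟨fun v => (card_map e).trans (H.1.1 v), fun c u v hu hv => ?_⟩, fun v => ?_⟩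
  · obtain ⟨a, hau, rfl⟩ := mem_map.mp hu
    exact H.1.2 a u v hau ((mem_map' e).mp hv)
  · simp only [map_eq_image, ← biUnion_image]
    exact card_image_le.trans (H.2 v)

theorem exists_isHLocalMulti_of_classes [Fintype C] {cls : C → Finset V}
    (hindep : ∀ c, IsIndepF (underlying D) (cls c)) (hcover : ∀ v, r ≤ #{c | v ∈ cls c})
    (hout : ∀ v, #{c | ∃ u ∈ cls c, D v u} ≤ h - r) :
    ∃ χ : V → Finset C, IsHLocalMulti D h r χ := by
  choose χ hχ hcard using fun v => exists_subset_card_eq (hcover v)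
  have mem_cls {c v} (hc : c ∈ χ v) : v ∈ cls c := (mem_filter_univ c).mp (hχ v hc)
  refine ⟨χ, ⟨hcard, fun c u v hu hv => hindep c u (mem_cls hu) v (mem_cls hv)⟩,
    fun v => (card_le_card fun c hc => ?_).trans (hout v)⟩
  obtain ⟨u, hu, hcu⟩ := mem_biUnion.mp hc
  exact (mem_filter_univ c).mpr ⟨u, mem_cls hcu, (mem_filter_univ u).mp hu⟩

end ColorClass

section LocalWeighting

variable {D : V → V → Prop} {h r : ℕ} {m : Finset V → ℕ}

theorem card_filter_sigma_fin {ι : Type*} [Fintype ι] (m : ι → ℕ) (P : ι → Prop)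
    [DecidablePred P] :
    #{c : Σ i, Fin (m i) | P c.1} = ∑ i with P i, m i := by
  rw [card_filter, Fintype.sum_sigma, sum_filter]
  exact sum_congr rfl fun i _ => by by_cases hi : P i <;> simp [hi]

theorem IsLocalWeighting.exists_isHLocalMulti_sigma (H : IsLocalWeighting D h r m) :
    ∃ χ : V → Finset (Σ A, Fin (m A)), IsHLocalMulti D h r χ :=
  exists_isHLocalMulti_of_classes (cls := Sigma.fst) (fun c => H.indep c.1 c.2.pos.ne')
    (fun v => (H.cover v).trans_eq (card_filter_sigma_fin m (v ∈ ·)).symm)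
    (fun v => (card_filter_sigma_fin m fun A => ∃ u ∈ A, D v u).trans_le (H.outWeight_le v))

theorem IsLocalWeighting.exists_isHLocalMulti (C : Type*) [Infinite C]
    (H : IsLocalWeighting D h r m) : ∃ χ : V → Finset C, IsHLocalMulti D h r χ := by
  obtain ⟨χ, hχ⟩ := H.exists_isHLocalMulti_sigma
  obtain ⟨e⟩ := nonempty_embedding_nat (Σ A, Fin (m A))
  exact ⟨_, hχ.map (e.trans (Infinite.natEmbedding C))⟩

/-- The fractional coloring obtained from a local weighting on dividing the weights by `r`. -/
noncomputable def FracColoring.ofLocalWeighting (hr : 0 < r) (H : IsLocalWeighting D h r m) :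
    FracColoring (underlying D) where
  x A := m A / r
  nonneg A := by positivity
  supp A hA := H.indep A fun h0 => hA (by rw [h0, Nat.cast_zero, zero_div])
  cover v := by
    rw [← sum_filter, ← sum_div, one_le_div (by positivity)]
    exact_mod_cast H.cover v

theorem localWeight_ofLocalWeighting_le (hr : 0 < r) (hrh : r ≤ h)
    (H : IsLocalWeighting D h r m) :
    localWeight D (FracColoring.ofLocalWeighting hr H) ≤ h / r := by
  have hr' : (0 : ℝ) < r := by positivity
  refine localWeight_le ((one_le_div hr').mpr (by exact_mod_cast hrh)) fun v => ?_
  have hout : (r + outWeight D m v : ℝ) ≤ h := by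
    exact_mod_cast (Nat.le_sub_iff_add_le' hrh).mp (H.outWeight_le v)
  calc 1 + outWeight D (FracColoring.ofLocalWeighting hr H).x v
      = (r + outWeight D m v) / r := by
        rw [add_div, div_self hr'.ne', outWeight, outWeight, Nat.cast_sum, sum_div]
        rfl
    _ ≤ h / r := by gcongr

end LocalWeighting

section Rounding

variable {D : V → V → Prop} {ι R : Type*} [Semiring R] [LinearOrder R] [IsStrictOrderedRing R]
  [FloorSemiring R]

theorem sum_le_sum_natCeil (s : Finset ι) (x : ι → R) :
    ∑ i ∈ s, x i ≤ (∑ i ∈ s, ⌈x i⌉₊ : ℕ) := by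
  rw [Nat.cast_sum]
  gcongr with i
  exact Nat.le_ceil _

theorem sum_natCeil_le_sum_add_card {s : Finset ι} {x : ι → R} (hx : ∀ i ∈ s, 0 ≤ x i) :
    (∑ i ∈ s, ⌈x i⌉₊ : ℕ) ≤ ∑ i ∈ s, x i + #s := by
  rw [Nat.cast_sum, card_eq_sum_ones, Nat.cast_sum, ← sum_add_distrib]
  gcongr with i hi
  simpa only [Nat.cast_one] using (Nat.ceil_lt_add_one (hx i hi)).le

theorem isLocalWeighting_ceil (f : FracColoring (underlying D)) {N h : ℕ}
    (hh : N * localWeight D f + Fintype.card (Finset V) ≤ h) :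
    IsLocalWeighting D h N fun A => ⌈N * f.x A⌉₊ where
  indep A hA := f.supp A fun h0 => hA (by rw [h0, mul_zero, Nat.ceil_zero])
  cover v := by
    have hcover : (N : ℝ) ≤ ∑ A with v ∈ A, N * f.x A := by
      rw [← mul_sum]
      exact le_mul_of_one_le_right N.cast_nonneg (f.one_le_sum_mem v)
    exact_mod_cast hcover.trans (sum_le_sum_natCeil _ _)
  outWeight_le v := by
    have hround : ((outWeight D (fun A => ⌈N * f.x A⌉₊) v : ℕ) : ℝ) ≤
        N * outWeight D f.x v + Fintype.card (Finset V) := by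
      rw [outWeight, outWeight, mul_sum]
      refine (sum_natCeil_le_sum_add_card fun A _ => mul_nonneg N.cast_nonneg (f.nonneg A)).trans ?_
      gcongr
      exact card_le_univ _
    have hlocal : N * (1 + outWeight D f.x v) ≤ N * localWeight D f := by
      gcongr
      exact one_add_outWeight_le_localWeight f v
    apply Nat.le_sub_of_add_le
    rify
    linarith

theorem exists_isHLocalMulti_div_lt (C : Type*) [Infinite C] (f : FracColoring (underlying D))
    {ε : ℝ} (hε : 0 < ε) :
    ∃ (h r : ℕ) (χ : V → Finset C),
      0 < r ∧ r ≤ h ∧ IsHLocalMulti D h r χ ∧ (h : ℝ) / r < localWeight D f + ε := by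
  set K : ℝ := (Fintype.card (Finset V) : ℝ)
  obtain ⟨N, hN⟩ := exists_nat_gt ((K + 1) / ε)
  have hN0 : (0 : ℝ) < N := lt_trans (by positivity) hN
  have hNε : K + 1 < N * ε := (div_lt_iff₀ hε).mp hN
  set h : ℕ := ⌈N * localWeight D f + K⌉₊
  have hw : (N : ℝ) ≤ N * localWeight D f :=
    le_mul_of_one_le_right hN0.le (one_le_localWeight f)
  have hle : N * localWeight D f + K ≤ h := Nat.le_ceil _
  have hlt : h < N * localWeight D f + K + 1 :=
    Nat.ceil_lt_add_one (add_nonneg (hN0.le.trans hw) (Nat.cast_nonneg _))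
  obtain ⟨χ, hχ⟩ := (isLocalWeighting_ceil f hle).exists_isHLocalMulti C
  refine ⟨h, N, χ, by exact_mod_cast hN0, ?_, hχ, ?_⟩
  · rify
    linarith [show 0 ≤ K by positivity]
  · rw [div_lt_iff₀ hN0]
    linarith

end Rounding

theorem fracDirLocal_le_div {D : V → V → Prop} {h r : ℕ} {χ : V → Finset C} (hr : 0 < r)
    (hrh : r ≤ h) (H : IsHLocalMulti D h r χ) : fracDirLocal D ≤ h / r :=
  (fracDirLocal_le_localWeight _).trans
    (localWeight_ofLocalWeighting_le hr hrh H.isLocalWeighting)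

theorem stmt12_general [Infinite C] (D : V → V → Prop) :
    fracDirLocal D = sInf {q : ℝ | ∃ (h r : ℕ) (χ : V → Finset C),
      0 < r ∧ r ≤ h ∧ IsHLocalMulti D h r χ ∧ q = (h : ℝ) / r} := by
  refine (IsGLB.csInf_eq ⟨?_, fun b hb => ?_⟩ ?_).symm
  · rintro _ ⟨h, r, χ, hr, hrh, hχ, rfl⟩
    exact fracDirLocal_le_div hr hrh hχ
  · refine le_fracDirLocal fun f => le_of_forall_pos_le_add fun ε hε => ?_
    obtain ⟨h, r, χ, hr, hrh, hχ, hlt⟩ := exists_isHLocalMulti_div_lt C f hε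
    exact (hb ⟨h, r, χ, hr, hrh, hχ, rfl⟩).trans hlt.le
  · let f := Classical.arbitrary (FracColoring (underlying D))
    obtain ⟨h, r, χ, hr, hrh, hχ, -⟩ := exists_isHLocalMulti_div_lt C f one_pos
    exact ⟨_, h, r, χ, hr, hrh, hχ, rfl⟩

/-- For every finite loopless digraph `D`, `ψ_d*(D)` equals the infimum of `h/r` over pairs
of positive integers `r ≤ h` such that `D` admits an `h`-local `r`-multi-coloring. -/
theorem stmt12 {V : Type} [Fintype V] (D : V → V → Prop) (hloop : ∀ v, ¬ D v v) :
    fracDirLocal D = sInf {q : ℝ | ∃ (h r : ℕ) (χ : V → Finset ℕ),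
      0 < r ∧ r ≤ h ∧ IsHLocalMulti D h r χ ∧ q = (h : ℝ) / r} :=
  stmt12_general D
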